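/- For all integers m, n, u, k with u ≥ 0, k ≥ 2, n ≥ 2 and m ≥ max{u+1, (k-1)(n-1)}, the determinant D(m,n,u,k) equals the number of lattice paths in L(u+1,1;m,n;k). -/

import Mathlib

/-- Binomial coefficient `C(a,b)` for integers, with the convention that it is `0` when `b < 0`. -/
def ichoose (a b : ℤ) : ℤ := if 0 ≤ b then (a.toNat.choose b.toNat : ℤ) else 0

/-- The determinant `D(m,n,u,k)` of the `(n-1)×(n-1)` matrix with `(i,j)` entry
`C(m - max{u, (k-1)j}, 1 - i + j)` for `i, j = 1, …, n-1`. -/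
def D (m n u k : ℤ) : ℤ :=
  Matrix.det (Matrix.of fun i j : Fin (n - 1).toNat =>
    ichoose (m - max u ((k - 1) * ((j : ℤ) + 1))) (1 - ((i : ℤ) + 1) + ((j : ℤ) + 1)))

/-- `L(u+1,1;m,n;k)`: lattice paths from `(u+1,1)` to `(m,n)` with unit steps `(1,0)` and `(0,1)`
(encoded as the list of steps, `true` = `(1,0)`, `false` = `(0,1)`) such that every point `(x,y)`
on the path satisfies `(k-1)(y-1) ≤ x-1`. -/
def L (u k m n : ℤ) : Set (List Bool) :=
  { s | (u + 1) + (s.count true : ℤ) = m ∧ 1 + (s.count false : ℤ) = n ∧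
        ∀ t, t <+: s →
          (k - 1) * ((1 + (t.count false : ℤ)) - 1) ≤ ((u + 1) + (t.count true : ℤ)) - 1 }

theorem hess_det (N : ℕ) (a : ℕ → ℕ → ℤ) (w : ℕ → ℤ) (h0 : w 0 = 1)
    (hdiag : ∀ j, a (j + 1) j = 1) (hz : ∀ i j, j + 1 < i → a i j = 0)
    (hw : ∀ j, j < N + 1 → ∑ i ∈ Finset.range (N + 2), w i * a i j = 0) :
    Matrix.det (Matrix.of fun i j : Fin (N + 1) => a i j) = (-1) ^ (N + 1) * w (N + 1) := by
  set A : Matrix (Fin (N + 1)) (Fin (N + 1)) ℤ := Matrix.of fun i j => a i j with hA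
  have h1 := Matrix.det_updateRow_sum A 0 (fun i => w i)
  have hrow : (∑ i : Fin (N + 1), w i • A i) = fun j : Fin (N + 1) => - (w (N + 1) * a (N + 1) j) := by
    funext j
    have := hw j j.2
    rw [Finset.sum_range_succ, ← Fin.sum_univ_eq_sum_range (fun i => w i * a i j)] at this
    simp only [Finset.sum_apply, Pi.smul_apply, smul_eq_mul, hA, Matrix.of_apply]
    linarith
  have h2 : A.det = (A.updateRow 0 (∑ i : Fin (N + 1), w i • A i)).det := by
    rw [h1]; simp [h0]
  rw [h2, hrow, Matrix.det_succ_row_zero, Finset.sum_eq_single (Fin.last N)]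
  · have h3 : ((A.updateRow 0 (fun j : Fin (N + 1) => - (w (N + 1) * a (N + 1) j))).submatrix
        Fin.succ (Fin.last N).succAbove).det = 1 := by
      rw [Matrix.det_of_isUpperTriangular]
      · apply Finset.prod_eq_one
        intro i _
        simp [hA, hdiag, Matrix.updateRow_apply]
      · intro i j hij
        have : (j : ℕ) < i := hij
        simp only [Matrix.submatrix_apply, Fin.succAbove_last, hA, Matrix.updateRow_apply,
          Fin.succ_ne_zero, if_false, Matrix.of_apply]
        apply hz
        simp; omega
    rw [h3]
    simp [hdiag, pow_succ]
  · intro j _ hj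
    have : (j : ℕ) < N := by
      have h5 : (j : ℕ) ≠ N := fun h => hj (Fin.ext (by simpa using h))
      omega
    have h4 : a (N + 1) j = 0 := hz _ _ (by omega)
    simp [h4]
  · simp

theorem ichoose_succ (s : ℕ) (b : ℤ) :
    ichoose ((s + 1 : ℕ) : ℤ) b = ichoose s b + ichoose s (b - 1) := by
  unfold ichoose
  by_cases hb : 0 ≤ b
  · lift b to ℕ using hb
    cases b with
    | zero => simp
    | succ b =>
      have e : ((b + 1 : ℕ) : ℤ) - 1 = (b : ℕ) := by push_cast; ring
      rw [e]
      simp only [Int.natCast_nonneg, if_true, Int.toNat_natCast, Nat.choose_succ_succ]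
      push_cast; ring
  · rw [if_neg hb, if_neg hb, if_neg (by omega)]; rfl

theorem ichoose_zero (b : ℤ) : ichoose 0 b = if b = 0 then 1 else 0 := by
  unfold ichoose
  by_cases hb : 0 ≤ b
  · lift b to ℕ using hb
    cases b with
    | zero => simp
    | succ b => simp; omega
  · rw [if_neg hb, if_neg (by omega)]

theorem ichoose_neg (a b : ℤ) (hb : b < 0) : ichoose a b = 0 := by
  unfold ichoose; rw [if_neg (by omega)]

theorem expand (A : ℕ → ℕ → ℤ) (c : ℕ → ℕ)
    (hA0 : ∀ s, s ≤ c 0 → A 0 s = 1)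
    (hrec : ∀ N s, s < c (N + 1) → A (N + 1) s = A (N + 1) (s + 1) + A N s)
    (hc : ∀ N s, s < c (N + 1) → s ≤ c N) (K : ℕ) :
    ∀ (s N : ℕ), N < K → s ≤ c N →
      (-1) ^ N * A N s = ∑ i ∈ Finset.range K, (-1) ^ i * A i 0 * ichoose s ((N : ℤ) - i) := by
  intro s
  induction s with
  | zero =>
    intro N hN _
    rw [Finset.sum_eq_single N]
    · simp [ichoose_zero]
    · intro i _ hi
      have : (N : ℤ) - i ≠ 0 := by omega
      simp [ichoose_zero, this]
    · intro h; simp at h; omega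
  | succ s ih =>
    intro N hN hs
    simp only [ichoose_succ, mul_add, Finset.sum_add_distrib]
    rw [← ih N hN (by omega)]
    cases N with
    | zero =>
      rw [Finset.sum_eq_zero, hA0 _ hs, hA0 _ (by omega)]
      · simp
      · intro i _
        rw [ichoose_neg _ _ (by push_cast; omega), mul_zero]
    | succ N =>
      have e : ∀ i : ℕ, ((N + 1 : ℕ) : ℤ) - i - 1 = (N : ℤ) - i := by
        intro i; push_cast; ring
      simp only [e]
      rw [← ih N (by omega) (hc _ _ (by omega)), hrec N s (by omega)]
      ring

theorem L_finite (u k m n : ℤ) : (L u k m n).Finite := by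
  apply (List.finite_length_eq Bool ((m - u - 1) + (n - 1)).toNat).subset
  rintro s ⟨h1, h2, -⟩
  have := List.count_true_add_count_false s
  simp only [Set.mem_ofPred_eq]
  omega

theorem L_append (u k m n : ℤ) (s : List Bool) (b : Bool) :
    s ++ [b] ∈ L u k m n ↔ (k - 1) * (n - 1) ≤ m - 1 ∧
      s ∈ L u k (if b then m - 1 else m) (if b then n else n - 1) := by
  unfold L
  simp only [Set.mem_ofPred_eq, List.prefix_concat_iff, List.count_append]
  constructor
  · rintro ⟨h1, h2, h3⟩
    have h4 := h3 _ (Or.inl rfl)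
    refine ⟨?_, ?_, ?_, fun t ht => h3 t (Or.inr ht)⟩
    · simp only [List.count_append] at h4
      push_cast at h1 h2 h4
      rw [← h1, ← h2]; linarith
    · cases b <;> simp at h1 h2 ⊢ <;> omega
    · cases b <;> simp at h1 h2 ⊢ <;> omega
  · rintro ⟨h0, h1, h2, h3⟩
    have e1 : u + 1 + ((List.count true s + List.count true [b] : ℕ) : ℤ) = m := by
      cases b <;> simp at h1 ⊢ <;> omega
    have e2 : 1 + ((List.count false s + List.count false [b] : ℕ) : ℤ) = n := by
      cases b <;> simp at h2 ⊢ <;> omega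
    refine ⟨e1, e2, ?_⟩
    rintro t (rfl | ht)
    · simp only [List.count_append]
      rw [e1, e2]; exact h0
    · exact h3 t ht

theorem L_rec (u k m n : ℤ) (h : (k - 1) * (n - 1) ≤ m - 1) (hne : n ≠ 1 ∨ m ≠ u + 1) :
    (L u k m n).ncard = (L u k (m - 1) n).ncard + (L u k m (n - 1)).ncard := by
  have inj : ∀ b : Bool, Function.Injective (fun s : List Bool => s ++ [b]) := by
    intro b s t hst; simpa using hst
  have hU : L u k m n = Set.image (fun s : List Bool => s ++ [true]) (L u k (m - 1) n) ∪
      Set.image (fun s : List Bool => s ++ [false]) (L u k m (n - 1)) := by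
    ext s
    rcases List.eq_nil_or_concat s with rfl | ⟨t, b, rfl⟩
    · simp only [Set.mem_union, Set.mem_image, List.append_eq_nil_iff]
      simp [L]
      intro h1 h2; omega
    · rw [List.concat_eq_append, L_append]
      cases b <;> simp [h]
  rw [hU, Set.ncard_union_eq ?_ ((L_finite _ _ _ _).image _) ((L_finite _ _ _ _).image _),
    Set.ncard_image_of_injective _ (inj _),
    Set.ncard_image_of_injective _ (inj _)]
  · rw [Set.disjoint_left]
    rintro _ ⟨s, _, rfl⟩ ⟨t, _, ht⟩
    simp at ht

theorem L_zero1 (u k m n : ℤ) (h : m - 1 < (k - 1) * (n - 1)) : (L u k m n).ncard = 0 := by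
  have : L u k m n = ∅ := by
    ext s
    simp only [Set.mem_empty_iff_false, iff_false]
    rintro ⟨h1, h2, h3⟩
    have := h3 s List.prefix_rfl
    rw [h1, h2] at this
    omega
  simp [this]

theorem L_zero2 (u k m n : ℤ) (h : m < u + 1) : (L u k m n).ncard = 0 := by
  have : L u k m n = ∅ := by
    ext s
    simp only [Set.mem_empty_iff_false, iff_false]
    rintro ⟨h1, h2, h3⟩
    omega
  simp [this]

theorem L_zero3 (u k m n : ℤ) (h : n < 1) : (L u k m n).ncard = 0 := by
  have : L u k m n = ∅ := by
    ext s
    simp only [Set.mem_empty_iff_false, iff_false]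
    rintro ⟨h1, h2, h3⟩
    omega
  simp [this]

theorem L_base (u k : ℤ) (hu : 0 ≤ u) (r : ℕ) : (L u k (u + 1 + r) 1).ncard = 1 := by
  induction r with
  | zero =>
    have : L u k (u + 1 + (0 : ℕ)) 1 = {[]} := by
      ext s
      simp only [Set.mem_singleton_iff]
      constructor
      · rintro ⟨h1, h2, -⟩
        have := List.count_true_add_count_false s
        apply List.eq_nil_of_length_eq_zero
        push_cast at h1
        omega
      · rintro rfl
        simp [L, hu]
    rw [this, Set.ncard_singleton]
  | succ r ih =>
    rw [L_rec _ _ _ _ (by push_cast; simp; omega) (Or.inr (by push_cast; omega)),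
      L_zero3 _ _ _ (1 - 1) (by omega)]
    have : u + 1 + ((r + 1 : ℕ) : ℤ) - 1 = u + 1 + r := by push_cast; ring
    rw [this, ih]

theorem det_eq_card_L (m n u k : ℤ) (hu : 0 ≤ u) (hk : 2 ≤ k) (hn : 2 ≤ n)
    (hm : max (u + 1) ((k - 1) * (n - 1)) ≤ m) :
    D m n u k = ((L u k m n).ncard : ℤ) := by
  obtain ⟨N, rfl⟩ : ∃ N : ℕ, n = N + 2 := ⟨(n - 2).toNat, by omega⟩
  obtain ⟨hm1, hm2⟩ := max_le_iff.mp hm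
  have hN : ((N : ℤ) + 2 - 1).toNat = N + 1 := by omega
  unfold D
  rw [hN]
  set b : ℕ → ℤ := fun j => m - max u ((k - 1) * j) with hb
  set A : ℕ → ℕ → ℤ := fun j t => ((L u k (m - t) (j + 1)).ncard : ℤ) with hA
  set c : ℕ → ℕ := fun j => if j = 0 then (m - u - 1).toNat else (b j).toNat with hcdef
  have key := expand A c
    (by
      intro s hs
      simp only [hcdef, if_true] at hs
      have e : m - (s : ℤ) = u + 1 + ((m - u - 1 - s).toNat : ℕ) := by omega
      simp only [hA]
      rw [e]
      have := L_base u k hu (m - u - 1 - s).toNat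
      simp only [Nat.cast_zero, zero_add]
      rw [this]; rfl)
    (by
      intro j s hs
      simp only [hcdef, hb, Nat.add_eq_zero_iff, one_ne_zero, and_false, if_false] at hs
      have h1 := le_max_left u ((k - 1) * ((j + 1 : ℕ) : ℤ))
      have h2 := le_max_right u ((k - 1) * ((j + 1 : ℕ) : ℤ))
      simp only [hA]
      rw [L_rec u k (m - s) ((j + 1 : ℕ) + 1)]
      · push_cast
        congr 4 <;> ring
      · have : ((j + 1 : ℕ) : ℤ) + 1 - 1 = ((j + 1 : ℕ) : ℤ) := by ring
        rw [this]
        omega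
      · left; push_cast; omega)
    (by
      intro j s hs
      simp only [hcdef, hb, Nat.add_eq_zero_iff, one_ne_zero, and_false, if_false] at hs ⊢
      have h1 := le_max_left u ((k - 1) * ((j + 1 : ℕ) : ℤ))
      split_ifs
      · omega
      · have h3 : max u ((k - 1) * (j : ℤ)) ≤ max u ((k - 1) * ((j + 1 : ℕ) : ℤ)) := by
          apply max_le_max le_rfl
          push_cast; nlinarith
        omega)
    (N + 2)
  have hbnn : ∀ j : ℕ, j ≤ N + 1 → 0 ≤ b j := by
    intro j hj
    have h3 : max u ((k - 1) * (j : ℤ)) ≤ m := by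
      apply max_le (by omega)
      have : (j : ℤ) ≤ N + 1 := by exact_mod_cast hj
      nlinarith
    simp only [hb]; omega
  have hh := hess_det N (fun i j => ichoose (b (j + 1)) (((j + 1 : ℕ) : ℤ) - i))
    (fun i => (-1) ^ i * A i 0)
    (by
      have := L_base u k hu (m - u - 1).toNat
      have e : m - ((0 : ℕ) : ℤ) = u + 1 + ((m - u - 1).toNat : ℕ) := by omega
      simp only [hA]
      rw [e]
      simp only [Nat.cast_zero, zero_add, pow_zero, one_mul]
      rw [this]; rfl)
    (by intro j; simp [ichoose])
    (by intro i j hij; exact ichoose_neg _ _ (by omega))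
    (by
      intro j hj
      have hnn := hbnn (j + 1) (by omega)
      have := key (b (j + 1)).toNat (j + 1) (by omega) (by simp [hcdef])
      rw [Int.toNat_of_nonneg hnn] at this
      rw [← this]
      have hz : A (j + 1) (b (j + 1)).toNat = 0 := by
        simp only [hA]
        rw [Int.toNat_of_nonneg hnn]
        rcases le_total u ((k - 1) * ((j + 1 : ℕ) : ℤ)) with h | h
        · rw [L_zero1]
          · rfl
          · simp only [hb, max_eq_right h]
            have : ((j + 1 : ℕ) : ℤ) + 1 - 1 = ((j + 1 : ℕ) : ℤ) := by ring
            rw [this]; omega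
        · rw [L_zero2]
          · rfl
          · simp only [hb, max_eq_left h]; omega
      rw [hz, mul_zero])
  have e1 : A (N + 1) 0 = ((L u k m (N + 2)).ncard : ℤ) := by
    simp only [hA]
    have e2 : ((N + 1 : ℕ) : ℤ) + 1 = N + 2 := by push_cast; ring
    rw [e2]; simp
  rw [← e1]
  have e3 : (-1 : ℤ) ^ (N + 1) * ((-1) ^ (N + 1) * A (N + 1) 0) = A (N + 1) 0 := by
    rw [← mul_assoc, ← mul_pow]; simp
  rw [e3] at hh
  rw [← hh]
  congr 1
  ext i j
  simp only [Matrix.of_apply, hb]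
  push_cast
  congr 1
  ring
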